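/- In the tadpole graph with cycle of k vertices and pendant path, let v be the path endpoint farthest from the cycle and u its neighbor. Then for a vertex u' on the path at distance l from v, the hitting time from u' to v equals l·h_{uv} - l(l-1), where h_{uv} is the hitting time from u to v. -/

import Mathlib

open scoped Classical

/-- Transition probability of the simple random walk on `G`. -/
noncomputable def stepProb {V : Type*} [Fintype V] (G : SimpleGraph V) (a b : V) : ℝ :=
  if G.Adj a b then 1 / (G.degree a) else 0

/-- Probability that the simple random walk started at `u` follows the step sequence `w`. -/
noncomputable def walkProb {V : Type*} [Fintype V] (G : SimpleGraph V) :
    (u : V) → {n : ℕ} → (Fin n → V) → ℝ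
  | _, 0, _ => 1
  | u, n + 1, w => stepProb G u (w 0) * walkProb G (w 0) (fun i : Fin n => w i.succ)

/-- Probability that the walk started at `u` first reaches `v` at time exactly `n` (for `n ≥ 1`). -/
noncomputable def firstHitProb {V : Type*} [Fintype V] (G : SimpleGraph V) (u v : V) (n : ℕ) : ℝ :=
  ∑ w ∈ Finset.univ.filter (fun w : Fin n → V =>
      (∀ i : Fin n, (i : ℕ) + 1 < n → w i ≠ v) ∧ ∀ i : Fin n, (i : ℕ) + 1 = n → w i = v),
    walkProb G u w

/-- Expected hitting time of `v` for the simple random walk on `G` started at `u`. -/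
noncomputable def hittingTime {V : Type*} [Fintype V] (G : SimpleGraph V) (u v : V) : ℝ :=
  if u = v then 0 else ∑' n : ℕ, (n : ℝ) * firstHitProb G u v n

/-- Expected first return time to `v` of the simple random walk on `G` started at `v`. -/
noncomputable def expectedReturnTime {V : Type*} [Fintype V] (G : SimpleGraph V) (v : V) : ℝ :=
  ∑' n : ℕ, (n : ℝ) * firstHitProb G v v n
/-- The tadpole graph: a cycle on `k` vertices (`Sum.inl`) together with a pendant path
on `l` additional vertices (`Sum.inr`), attached to cycle vertex `0`; path vertex `j` is at
distance `j + 1` from the cycle, so `Sum.inr ⟨l-1,_⟩` is the far endpoint of the path. -/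
def tadpole (k l : ℕ) : SimpleGraph (Fin k ⊕ Fin l) :=
  SimpleGraph.fromRel (fun x y =>
    match x, y with
    | Sum.inl i, Sum.inl j => ((i : ℕ) + 1) % k = (j : ℕ)
    | Sum.inl i, Sum.inr j => (i : ℕ) = 0 ∧ (j : ℕ) = 0
    | Sum.inr i, Sum.inr j => (i : ℕ) + 1 = (j : ℕ)
    | Sum.inr _, Sum.inl _ => False)


lemma stepProb_nonneg_aux {V : Type*} [Fintype V] (G : SimpleGraph V) (a b : V) :
    0 ≤ stepProb G a b := by
  unfold stepProb; split_ifs <;> positivity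

lemma stepProb_sum_aux {V : Type*} [Fintype V] (G : SimpleGraph V) (a : V) (s : Finset V)
    (hs : ∀ b, G.Adj a b ↔ b ∈ s) (φ : V → ℝ) :
    ∑ b, stepProb G a b * φ b = (∑ b ∈ s, φ b) / s.card := by
  have h1 : G.neighborFinset a = s := by
    ext b; simp [hs]
  have h2 : G.degree a = s.card := by
    rw [← SimpleGraph.card_neighborFinset_eq_degree, h1]
  have h3 : ∀ b, stepProb G a b * φ b = if b ∈ s then φ b / s.card else 0 := by
    intro b
    unfold stepProb
    rw [h2]
    by_cases h : b ∈ s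
    · rw [if_pos ((hs b).2 h), if_pos h]; ring
    · rw [if_neg (fun h' => h ((hs b).1 h')), if_neg h]; ring
  simp_rw [h3]
  rw [Finset.sum_ite_mem, Finset.univ_inter, Finset.sum_div]

lemma firstHitProb_one_aux {V : Type*} [Fintype V] (G : SimpleGraph V) (a v : V) :
    firstHitProb G a v 1 = stepProb G a v := by
  unfold firstHitProb
  rw [Finset.sum_eq_single (fun _ => v)]
  · simp [walkProb]
  · intro w hw hne
    exfalso
    apply hne
    funext i
    have := (Finset.mem_filter.1 hw).2.2 i (by omega)
    exact this
  · intro h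
    exfalso
    apply h
    simp

lemma firstHitProb_succ_aux {V : Type*} [Fintype V] (G : SimpleGraph V) (a v : V) (n : ℕ) :
    firstHitProb G a v (n + 2) =
      ∑ b, stepProb G a b * (if b = v then 0 else firstHitProb G b v (n + 1)) := by
  unfold firstHitProb
  rw [Finset.sum_filter, ← (Fin.consEquiv (fun _ : Fin (n + 2) => V)).sum_comp,
    Fintype.sum_prod_type]
  refine Finset.sum_congr rfl fun b _ => ?_
  by_cases hb : b = v
  · rw [if_pos hb, mul_zero]
    refine Finset.sum_eq_zero fun w _ => ?_
    rw [if_neg]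
    rintro ⟨h, -⟩
    exact h 0 (by simp) (by simpa [Fin.consEquiv] using hb)
  · rw [if_neg hb, Finset.sum_filter, Finset.mul_sum]
    refine Finset.sum_congr rfl fun w _ => ?_
    have key : ((∀ i : Fin (n + 2), (i : ℕ) + 1 < n + 2 →
          (Fin.consEquiv (fun _ : Fin (n + 2) => V)) (b, w) i ≠ v) ∧
        ∀ i : Fin (n + 2), (i : ℕ) + 1 = n + 2 →
          (Fin.consEquiv (fun _ : Fin (n + 2) => V)) (b, w) i = v) ↔
        ((∀ i : Fin (n + 1), (i : ℕ) + 1 < n + 1 → w i ≠ v) ∧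
          ∀ i : Fin (n + 1), (i : ℕ) + 1 = n + 1 → w i = v) := by
      simp [Fin.forall_fin_succ (n := n + 1), Fin.consEquiv, hb]
    by_cases h : ((∀ i : Fin (n + 1), (i : ℕ) + 1 < n + 1 → w i ≠ v) ∧
          ∀ i : Fin (n + 1), (i : ℕ) + 1 = n + 1 → w i = v)
    · rw [if_pos (key.2 h), if_pos h]
      simp [walkProb, Fin.consEquiv]
    · rw [if_neg (fun h' => h (key.1 h')), if_neg h, mul_zero]

/-- Survival probability. -/
noncomputable def survAux {V : Type*} [Fintype V] (G : SimpleGraph V) (v : V) : ℕ → V → ℝ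
  | 0, _ => 1
  | n + 1, a => ∑ b, stepProb G a b * (if b = v then 0 else survAux G v n b)

lemma survAux_nonneg {V : Type*} [Fintype V] (G : SimpleGraph V) (v : V) (n : ℕ) :
    ∀ a, 0 ≤ survAux G v n a := by
  induction n with
  | zero => intro a; simp [survAux]
  | succ n ih =>
    intro a
    refine Finset.sum_nonneg fun b _ => mul_nonneg (stepProb_nonneg_aux G a b) ?_
    split_ifs
    · exact le_rfl
    · exact ih b

lemma firstHit_eq_surv {V : Type*} [Fintype V] (G : SimpleGraph V) (v : V)
    (hP : ∀ a, a ≠ v → ∑ b, stepProb G a b = 1) (n : ℕ) :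
    ∀ a, a ≠ v → firstHitProb G a v (n + 1) = survAux G v n a - survAux G v (n + 1) a := by
  induction n with
  | zero =>
    intro a ha
    rw [firstHitProb_one_aux]
    have : survAux G v 0 a = ∑ b, stepProb G a b := by rw [hP a ha]; rfl
    rw [this]
    simp only [survAux]
    rw [← Finset.sum_sub_distrib, Finset.sum_eq_single v]
    · simp
    · intro b _ hb; simp [hb]
    · simp
  | succ n ih =>
    intro a ha
    rw [firstHitProb_succ_aux]
    show _ = (∑ b, stepProb G a b * (if b = v then 0 else survAux G v n b)) -
      ∑ b, stepProb G a b * (if b = v then 0 else survAux G v (n + 1) b)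
    rw [← Finset.sum_sub_distrib]
    refine Finset.sum_congr rfl fun b _ => ?_
    split_ifs with h
    · ring
    · rw [ih b h]; ring

lemma surv_sum_le {V : Type*} [Fintype V] (G : SimpleGraph V) (v : V)
    (g : V → ℝ) (hg0 : ∀ a, 0 ≤ g a)
    (hg : ∀ a, a ≠ v → 1 + ∑ b, stepProb G a b * g b ≤ g a) (N : ℕ) :
    ∀ a, a ≠ v → ∑ n ∈ Finset.range N, survAux G v n a ≤ g a := by
  induction N with
  | zero => intro a _; simpa using hg0 a
  | succ N ih =>
    intro a ha
    refine le_trans ?_ (hg a ha)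
    rw [Finset.sum_range_succ']
    have h0 : survAux G v 0 a = 1 := rfl
    rw [h0, add_comm]
    gcongr
    simp only [survAux]
    rw [Finset.sum_comm]
    refine Finset.sum_le_sum fun b _ => ?_
    rw [← Finset.mul_sum]
    refine mul_le_mul_of_nonneg_left ?_ (stepProb_nonneg_aux G a b)
    by_cases h : b = v
    · simpa [h] using hg0 v
    · simpa [h] using ih b h

lemma hittingTime_rec {V : Type*} [Fintype V] (G : SimpleGraph V) (v : V)
    (hP : ∀ a, a ≠ v → ∑ b, stepProb G a b = 1)
    (g : V → ℝ) (hg0 : ∀ a, 0 ≤ g a)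
    (hg : ∀ a, a ≠ v → 1 + ∑ b, stepProb G a b * g b ≤ g a) (a : V) (ha : a ≠ v) :
    hittingTime G a v = 1 + ∑ b, stepProb G a b * hittingTime G b v := by
  have hS : ∀ a, a ≠ v → Summable (fun n => survAux G v n a) := fun a ha =>
    summable_of_sum_range_le (fun n => survAux_nonneg G v n a)
      (fun N => surv_sum_le G v g hg0 hg N a ha)
  have hf := firstHit_eq_surv G v hP
  have hf0 : ∀ a n, 0 ≤ firstHitProb G a v (n + 1) := by
    intro a n
    induction n generalizing a with
    | zero => rw [firstHitProb_one_aux]; exact stepProb_nonneg_aux G a v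
    | succ n ih =>
      rw [firstHitProb_succ_aux]
      refine Finset.sum_nonneg fun b _ => mul_nonneg (stepProb_nonneg_aux G a b) ?_
      split_ifs
      · exact le_rfl
      · exact ih b
  have hpart : ∀ a, a ≠ v → ∀ N : ℕ, ∑ n ∈ Finset.range N, ((n : ℝ) + 1) * firstHitProb G a v (n + 1)
      = ∑ n ∈ Finset.range N, survAux G v n a - N * survAux G v N a := by
    intro a ha N
    induction N with
    | zero => simp
    | succ N ih =>
      rw [Finset.sum_range_succ, ih, Finset.sum_range_succ, hf N a ha]
      push_cast; ring
  have hsum1 : ∀ a, a ≠ v → Summable (fun n : ℕ => ((n : ℝ) + 1) * firstHitProb G a v (n + 1)) := by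
    intro a ha
    refine summable_of_sum_range_le (c := g a)
      (fun n => mul_nonneg (by positivity) (hf0 a n)) (fun N => ?_)
    rw [hpart a ha N]
    have h1 := surv_sum_le G v g hg0 hg N a ha
    have h2 : 0 ≤ (N : ℝ) * survAux G v N a :=
      mul_nonneg (by positivity) (survAux_nonneg G v N a)
    linarith
  have hsum : ∀ a, a ≠ v → Summable (fun n : ℕ => (n : ℝ) * firstHitProb G a v n) := by
    intro a ha
    rw [← summable_nat_add_iff 1]
    simpa using hsum1 a ha
  have hone : HasSum (fun n : ℕ => firstHitProb G a v (n + 1)) 1 := by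
    rw [hasSum_iff_tendsto_nat_of_nonneg (fun n => hf0 a n)]
    have h1 : ∀ N : ℕ, ∑ n ∈ Finset.range N, firstHitProb G a v (n + 1)
        = 1 - survAux G v N a := by
      intro N
      induction N with
      | zero => simp [survAux]
      | succ N ih => rw [Finset.sum_range_succ, ih, hf N a ha]; ring
    simp_rw [h1]
    simpa using (hS a ha).tendsto_atTop_zero.const_sub 1
  have hT : hittingTime G a v = ∑' n : ℕ, ((n : ℝ) + 1) * firstHitProb G a v (n + 1) := by
    unfold hittingTime
    rw [if_neg ha, (hsum a ha).tsum_eq_zero_add]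
    simp
  have hB : ∀ b, HasSum (fun n : ℕ => stepProb G a b *
      (if b = v then 0 else (n : ℝ) * firstHitProb G b v n))
      (stepProb G a b * hittingTime G b v) := by
    intro b
    refine HasSum.mul_left _ ?_
    unfold hittingTime
    by_cases h : b = v
    · simp [h, hasSum_zero]
    · simp only [if_neg h]
      exact (hsum b h).hasSum
  have hC := hone.add (hasSum_sum (s := Finset.univ) (fun b _ => hB b))
  rw [hT, ← hC.tsum_eq]
  refine tsum_congr fun n => ?_
  cases n with
  | zero => simp
  | succ n =>
    have : ∑ b, stepProb G a b * (if b = v then 0 else ((n + 1 : ℕ) : ℝ) * firstHitProb G b v (n + 1))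
        = ((n + 1 : ℕ) : ℝ) * firstHitProb G a v (n + 1 + 1) := by
      rw [firstHitProb_succ_aux, Finset.mul_sum]
      refine Finset.sum_congr rfl fun b _ => ?_
      split_ifs <;> ring
    rw [this]; ring


set_option linter.unusedSimpArgs false

lemma mod_aux (k x : ℕ) (hx : x < k) : (x + 1) % k = if x + 1 = k then 0 else x + 1 := by
  split_ifs with h
  · rw [h, Nat.mod_self]
  · exact Nat.mod_eq_of_lt (by omega)

lemma tadpole_ll (k l : ℕ) (i j : Fin k) : (tadpole k l).Adj (Sum.inl i) (Sum.inl j) ↔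
    (i : ℕ) ≠ j ∧ ((if (i : ℕ) + 1 = k then 0 else (i : ℕ) + 1) = j ∨
      (if (j : ℕ) + 1 = k then 0 else (j : ℕ) + 1) = i) := by
  rw [← mod_aux k i i.2, ← mod_aux k j j.2]
  simp [tadpole, SimpleGraph.fromRel_adj, Fin.ext_iff]

lemma tadpole_lr (k l : ℕ) (i : Fin k) (j : Fin l) :
    (tadpole k l).Adj (Sum.inl i) (Sum.inr j) ↔ (i : ℕ) = 0 ∧ (j : ℕ) = 0 := by
  simp [tadpole, SimpleGraph.fromRel_adj]

lemma tadpole_rl (k l : ℕ) (i : Fin k) (j : Fin l) :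
    (tadpole k l).Adj (Sum.inr j) (Sum.inl i) ↔ (i : ℕ) = 0 ∧ (j : ℕ) = 0 := by
  simp [tadpole, SimpleGraph.fromRel_adj]

lemma tadpole_rr (k l : ℕ) (i j : Fin l) : (tadpole k l).Adj (Sum.inr i) (Sum.inr j) ↔
    ((i : ℕ) + 1 = j ∨ (j : ℕ) + 1 = i) := by
  simp only [tadpole, SimpleGraph.fromRel_adj, ne_eq, Sum.inr.injEq, Fin.ext_iff]
  omega

lemma step_cyc (k l : ℕ) (hk : 3 ≤ k) (i : Fin k) (hi : 0 < (i : ℕ)) (φ : Fin k ⊕ Fin l → ℝ) :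
    ∑ b, stepProb (tadpole k l) (Sum.inl i) b * φ b =
      (φ (Sum.inl ⟨i - 1, by omega⟩) +
        φ (Sum.inl ⟨if (i : ℕ) + 1 = k then 0 else (i : ℕ) + 1, by split_ifs <;> omega⟩)) / 2 := by
  have hne : (Sum.inl ⟨i - 1, by omega⟩ : Fin k ⊕ Fin l) ≠
      Sum.inl ⟨if (i : ℕ) + 1 = k then 0 else (i : ℕ) + 1, by split_ifs <;> omega⟩ := by
    simp only [ne_eq, Sum.inl.injEq, Fin.ext_iff]
    split_ifs <;> omega
  rw [stepProb_sum_aux (tadpole k l) (Sum.inl i) {Sum.inl ⟨i - 1, by omega⟩,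
    Sum.inl ⟨if (i : ℕ) + 1 = k then 0 else (i : ℕ) + 1, by split_ifs <;> omega⟩}]
  · rw [Finset.sum_pair hne, Finset.card_pair hne]; norm_num
  · rintro (b | b)
    · have := b.2
      have := i.2
      simp only [tadpole_ll, Finset.mem_insert, Finset.mem_singleton, Sum.inl.injEq, Fin.ext_iff]
      split_ifs <;> omega
    · simp only [tadpole_lr, Finset.mem_insert, Finset.mem_singleton, reduceCtorEq, or_false, false_or, or_self, iff_false, true_and, and_true,
        and_false, not_false_eq_true]
      omega

lemma step_root (k l : ℕ) (hk : 3 ≤ k) (hl : 0 < l) (φ : Fin k ⊕ Fin l → ℝ) :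
    ∑ b, stepProb (tadpole k l) (Sum.inl ⟨0, by omega⟩) b * φ b =
      (φ (Sum.inl ⟨1, by omega⟩) + φ (Sum.inl ⟨k - 1, by omega⟩) +
        φ (Sum.inr ⟨0, by omega⟩)) / 3 := by
  have hne : (Sum.inl ⟨k - 1, by omega⟩ : Fin k ⊕ Fin l) ≠ Sum.inr ⟨0, by omega⟩ := by simp
  have hnm : (Sum.inl ⟨1, by omega⟩ : Fin k ⊕ Fin l) ∉
      ({Sum.inl ⟨k - 1, by omega⟩, Sum.inr ⟨0, by omega⟩} : Finset (Fin k ⊕ Fin l)) := by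
    simp only [Finset.mem_insert, Finset.mem_singleton, Sum.inl.injEq, Fin.ext_iff, reduceCtorEq, or_false, false_or, or_self, iff_false, true_and, and_true,
        and_false, not_false_eq_true]
    omega
  rw [stepProb_sum_aux (tadpole k l) (Sum.inl ⟨0, by omega⟩)
    (insert (Sum.inl ⟨1, by omega⟩) {Sum.inl ⟨k - 1, by omega⟩, Sum.inr ⟨0, by omega⟩})]
  · rw [Finset.sum_insert hnm, Finset.sum_pair hne, Finset.card_insert_of_notMem hnm,
      Finset.card_pair hne]
    norm_num; ring
  · rintro (b | b)
    · have := b.2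
      simp only [tadpole_ll, Finset.mem_insert, Finset.mem_singleton, Sum.inl.injEq, Fin.ext_iff,
        reduceCtorEq, or_false, false_or, or_self, iff_false, true_and, and_true,
        and_false, not_false_eq_true]
      split_ifs <;> first | omega | grind
    · simp only [tadpole_lr, Finset.mem_insert, Finset.mem_singleton, Sum.inr.injEq, Fin.ext_iff,
        reduceCtorEq, or_false, false_or, or_self, iff_false, true_and, and_true,
        and_false, not_false_eq_true]

lemma step_path0 (k l : ℕ) (hk : 3 ≤ k) (hl : 1 < l) (φ : Fin k ⊕ Fin l → ℝ) :
    ∑ b, stepProb (tadpole k l) (Sum.inr ⟨0, by omega⟩) b * φ b =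
      (φ (Sum.inl ⟨0, by omega⟩) + φ (Sum.inr ⟨1, by omega⟩)) / 2 := by
  have hne : (Sum.inl ⟨0, by omega⟩ : Fin k ⊕ Fin l) ≠ Sum.inr ⟨1, by omega⟩ := by simp
  rw [stepProb_sum_aux (tadpole k l) (Sum.inr ⟨0, by omega⟩)
    {Sum.inl ⟨0, by omega⟩, Sum.inr ⟨1, by omega⟩}]
  · rw [Finset.sum_pair hne, Finset.card_pair hne]; norm_num
  · rintro (b | b)
    · simp only [tadpole_rl, Finset.mem_insert, Finset.mem_singleton, Sum.inl.injEq, Fin.ext_iff,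
        reduceCtorEq, or_false, false_or, or_self, iff_false, true_and, and_true,
        and_false, not_false_eq_true]
    · simp only [tadpole_rr, Finset.mem_insert, Finset.mem_singleton, Sum.inr.injEq, Fin.ext_iff,
        reduceCtorEq, or_false, false_or, or_self, iff_false, true_and, and_true,
        and_false, not_false_eq_true]
      omega

lemma step_path (k l j : ℕ) (hl : j + 2 < l) (φ : Fin k ⊕ Fin l → ℝ) :
    ∑ b, stepProb (tadpole k l) (Sum.inr ⟨j + 1, by omega⟩) b * φ b =
      (φ (Sum.inr ⟨j, by omega⟩) + φ (Sum.inr ⟨j + 2, by omega⟩)) / 2 := by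
  have hne : (Sum.inr ⟨j, by omega⟩ : Fin k ⊕ Fin l) ≠ Sum.inr ⟨j + 2, by omega⟩ := by
    simp
  rw [stepProb_sum_aux (tadpole k l) (Sum.inr ⟨j + 1, by omega⟩)
    {Sum.inr ⟨j, by omega⟩, Sum.inr ⟨j + 2, by omega⟩}]
  · rw [Finset.sum_pair hne, Finset.card_pair hne]; norm_num
  · rintro (b | b)
    · simp only [tadpole_rl, Finset.mem_insert, Finset.mem_singleton, reduceCtorEq, or_false, false_or, or_self, iff_false, true_and, and_true,
        and_false, not_false_eq_true]
    · simp only [tadpole_rr, Finset.mem_insert, Finset.mem_singleton, Sum.inr.injEq, Fin.ext_iff]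
      omega

/-- Explicit potential on the tadpole. -/
noncomputable def gAux (k l : ℕ) : Fin k ⊕ Fin l → ℝ
  | Sum.inl i => (l : ℝ) * (2 * k + l) + (i : ℝ) * (k - i)
  | Sum.inr j => ((l : ℝ) - 1 - j) * (2 * k + l + 1 + j)

lemma tadpole_cases (k l : ℕ) (hl : 0 < l) (P : Fin k ⊕ Fin l → Prop)
    (h1 : ∀ i : Fin k, 0 < (i : ℕ) → P (Sum.inl i))
    (h2 : ∀ h : 0 < k, P (Sum.inl ⟨0, h⟩))
    (h3 : ∀ h : 1 < l, P (Sum.inr ⟨0, by omega⟩))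
    (h4 : ∀ j, ∀ h : j + 2 < l, P (Sum.inr ⟨j + 1, by omega⟩))
    (a : Fin k ⊕ Fin l) (ha : a ≠ Sum.inr ⟨l - 1, by omega⟩) : P a := by
  rcases a with i | j
  · rcases Nat.eq_zero_or_pos (i : ℕ) with h | h
    · have : i = ⟨0, by have := i.2; omega⟩ := Fin.ext h
      rw [this]; exact h2 _
    · exact h1 i h
  · obtain ⟨j, hj⟩ := j
    have hj' : j ≠ l - 1 := by
      intro h; apply ha; simp [h]
    cases j with
    | zero => exact h3 (by omega)
    | succ j => exact h4 j (by omega)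

lemma tadpole_rec (k l : ℕ) (hk : 3 ≤ k) (hl : 0 < l)
    (a : Fin k ⊕ Fin l) (ha : a ≠ Sum.inr ⟨l - 1, by omega⟩) :
    hittingTime (tadpole k l) a (Sum.inr ⟨l - 1, by omega⟩) =
      1 + ∑ b, stepProb (tadpole k l) a b *
        hittingTime (tadpole k l) b (Sum.inr ⟨l - 1, by omega⟩) := by
  refine hittingTime_rec (tadpole k l) _ ?_ (gAux k l) ?_ ?_ a ha
  · intro a ha
    have : ∑ b, stepProb (tadpole k l) a b * (fun _ => (1 : ℝ)) b = 1 := by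
      refine tadpole_cases k l hl
        (fun a => ∑ b, stepProb (tadpole k l) a b * (fun _ => (1 : ℝ)) b = 1) ?_ ?_ ?_ ?_ a ha
      · intro i hi; rw [step_cyc k l hk i hi]; norm_num
      · intro h; rw [step_root k l hk hl]; norm_num
      · intro h; rw [step_path0 k l hk h]; norm_num
      · intro j h; rw [step_path k l j h]; norm_num
    simpa using this
  · rintro (i | j)
    · have h : ((i : ℕ) : ℝ) ≤ k := by exact_mod_cast i.2.le
      have : 0 ≤ (k : ℝ) - (i : ℕ) := by linarith
      simp only [gAux]
      positivity
    · have h : ((j : ℕ) : ℝ) + 1 ≤ l := by exact_mod_cast j.2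
      have : 0 ≤ (l : ℝ) - 1 - (j : ℕ) := by linarith
      simp only [gAux]
      positivity
  · refine fun a ha => tadpole_cases k l hl
      (fun a => 1 + ∑ b, stepProb (tadpole k l) a b * gAux k l b ≤ gAux k l a) ?_ ?_ ?_ ?_ a ha
    · intro i hi
      rw [step_cyc k l hk i hi]
      simp only [gAux]
      have h1 : (((i : ℕ) - 1 : ℕ) : ℝ) = (i : ℕ) - 1 := by
        rw [Nat.cast_sub (by omega)]; simp
      rw [h1]
      split_ifs with h
      · have h2 : (k : ℝ) = (i : ℕ) + 1 := by exact_mod_cast h.symm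
        rw [h2]; push_cast
        apply le_of_eq; ring
      · push_cast
        apply le_of_eq; ring
    · intro h
      rw [step_root k l hk hl]
      simp only [gAux]
      rw [Nat.cast_sub (by omega : 1 ≤ k)]
      push_cast
      apply le_of_eq; ring
    · intro h
      rw [step_path0 k l hk h]
      simp only [gAux]
      push_cast
      apply le_of_eq; ring
    · intro j h
      rw [step_path k l j h]
      simp only [gAux]
      push_cast
      apply le_of_eq; ring

lemma hit_path (k l : ℕ) (hk : 3 ≤ k) (hl : 1 < l) (m : ℕ) :
    ∀ hm : m + 1 < l,
    hittingTime (tadpole k l) (Sum.inr ⟨l - 1 - m, by omega⟩) (Sum.inr ⟨l - 1, by omega⟩) =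
      m * hittingTime (tadpole k l) (Sum.inr ⟨l - 2, by omega⟩) (Sum.inr ⟨l - 1, by omega⟩)
        - m * (m - 1 : ℝ) ∧
    hittingTime (tadpole k l) (Sum.inr ⟨l - 2 - m, by omega⟩) (Sum.inr ⟨l - 1, by omega⟩) =
      (m + 1) * hittingTime (tadpole k l) (Sum.inr ⟨l - 2, by omega⟩) (Sum.inr ⟨l - 1, by omega⟩)
        - (m + 1) * (m : ℝ) := by
  induction m with
  | zero =>
    intro _
    constructor
    · simp [hittingTime]
    · simp
  | succ m ih =>
    intro hm
    obtain ⟨h1, h2⟩ := ih (by omega)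
    have e1 : (⟨l - 1 - (m + 1), by omega⟩ : Fin l) = ⟨l - 2 - m, by omega⟩ := by
      apply Fin.ext; show l - 1 - (m + 1) = l - 2 - m; omega
    refine ⟨?_, ?_⟩
    · rw [e1, h2]; push_cast; ring
    · have r := tadpole_rec k l hk (by omega) (Sum.inr ⟨(l - 2 - (m + 1)) + 1, by omega⟩)
        (by simp only [ne_eq, Sum.inr.injEq, Fin.ext_iff]; omega)
      rw [step_path k l (l - 2 - (m + 1)) (by omega)] at r
      have e2 : (⟨(l - 2 - (m + 1)) + 1, by omega⟩ : Fin l) = ⟨l - 2 - m, by omega⟩ := by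
        apply Fin.ext; show (l - 2 - (m + 1)) + 1 = l - 2 - m; omega
      have e3 : (⟨(l - 2 - (m + 1)) + 2, by omega⟩ : Fin l) = ⟨l - 1 - m, by omega⟩ := by
        apply Fin.ext; show (l - 2 - (m + 1)) + 2 = l - 1 - m; omega
      rw [e2, e3, h1, h2] at r
      push_cast
      linarith

theorem stmt_8 (k l : ℕ) (hk : 3 ≤ k) (hl : 1 ≤ l)
    (v : Fin k ⊕ Fin l) (hv : v = Sum.inr ⟨l - 1, by omega⟩)
    (u : Fin k ⊕ Fin l) (hu : (tadpole k l).Adj u v)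
    (m : ℕ) (hm : m ≤ l - 1) :
    hittingTime (tadpole k l) (Sum.inr ⟨l - 1 - m, by omega⟩) v =
      m * hittingTime (tadpole k l) u v - m * (m - 1 : ℝ) := by
  subst hv
  rcases Nat.eq_zero_or_pos m with rfl | hm0
  · simp [hittingTime]
  · have hl2 : 1 < l := by omega
    have hu' : u = Sum.inr ⟨l - 2, by omega⟩ := by
      rcases u with i | j
      · rw [tadpole_lr] at hu
        have := hu.2
        simp only at this
        omega
      · rw [tadpole_rr] at hu
        simp only at hu
        have := j.2
        simp only [Sum.inr.injEq, Fin.ext_iff]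
        omega
    subst hu'
    obtain ⟨m, rfl⟩ : ∃ n, m = n + 1 := ⟨m - 1, by omega⟩
    have h := (hit_path k l hk hl2 m (by omega)).2
    have e1 : (⟨l - 1 - (m + 1), by omega⟩ : Fin l) = ⟨l - 2 - m, by omega⟩ := by
      apply Fin.ext; show l - 1 - (m + 1) = l - 2 - m; omega
    rw [e1, h]
    push_cast
    ring
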